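/- Let f(t) = ∑_{i=0}^n a_i t^i be a polynomial with integer coefficients such that a_n ≠ 0 and gcd(a_0, a_1, …, a_n) = 1 (f is primitive). Fix a prime p and let α_1, …, α_n be the roots of f in the algebraic closure of ℚ_p, counted with multiplicity. Then ∑_{i : ‖α_i‖_p > 1} log ‖α_i‖_p = v_p(a_n) · log p, where v_p denotes the p-adic valuation of the integer a_n. -/

import Mathlib

/-!
The identity is multiplicativity of the Gauss norm `|∑ cᵢ tⁱ| = max ‖cᵢ‖` for the nonarchimedean
norm on the algebraic closure of `ℚ_p`. Factor `f = aₙ ∏ (t - αᵢ)` there. The Gauss norm of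
`t - α` is `max 1 ‖α‖` (`gaussNorm_X_sub_C_padic`), and the Gauss norm of `f` is `1`, because `f`
has integer coefficients, not all divisible by `p` (`gaussNorm_map_of_isPrimitive`). Hence
`‖aₙ‖ * ∏ max 1 ‖αᵢ‖ = 1`, with `‖aₙ‖ = p ^ (-v_p(aₙ))`, and taking logarithms gives the claim,
since `log (max 1 ‖α‖)` is `log ‖α‖` when `‖α‖ > 1` and `0` otherwise.
-/

open Polynomial

/-- The unique extension of the `p`-adic absolute value to the algebraic closure of `ℚ_[p]`
(with `|p|_p = 1/p`): for `α` with minimal polynomial of degree `d` over `ℚ_[p]` and constant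
coefficient `a₀`, one has `‖α‖_p = ‖a₀‖ ^ (1/d)`. -/
noncomputable def padicClosureAbs (p : ℕ) [Fact p.Prime] (α : AlgebraicClosure ℚ_[p]) : ℝ :=
  ‖(minpoly ℚ_[p] α).coeff 0‖ ^ (((minpoly ℚ_[p] α).natDegree : ℝ)⁻¹)

/-- The closed formula through the constant coefficient of the minimal polynomial agrees with the
spectral norm, which is the norm of Mathlib's normed field `PadicAlgCl p`. -/
lemma padicClosureAbs_eq_norm (p : ℕ) [Fact p.Prime] (α : PadicAlgCl p) :
    padicClosureAbs p α = ‖α‖ := by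
  rw [← PadicAlgCl.spectralNorm_eq, spectralNorm.spectralNorm_eq_norm_coeff_zero_rpow, one_div]
  rfl

/-- The norm of `PadicAlgCl p`, bundled as an absolute value. -/
noncomputable def padicAlgClAbv (p : ℕ) [Fact p.Prime] : AbsoluteValue (PadicAlgCl p) ℝ :=
  IsAbsoluteValue.toAbsoluteValue (norm : PadicAlgCl p → ℝ)

lemma padicAlgClAbv_apply (p : ℕ) [Fact p.Prime] (x : PadicAlgCl p) :
    padicAlgClAbv p x = ‖x‖ := rfl

lemma isNonarchimedean_padicAlgClAbv (p : ℕ) [Fact p.Prime] :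
    IsNonarchimedean (padicAlgClAbv p) :=
  PadicAlgCl.isNonarchimedean p

lemma norm_intCast_padicAlgCl (p : ℕ) [Fact p.Prime] (z : ℤ) :
    ‖(z : PadicAlgCl p)‖ = ‖(z : ℚ_[p])‖ := by
  rw [← PadicAlgCl.norm_extends]
  simp

lemma gaussNorm_X_sub_C_padic (p : ℕ) [Fact p.Prime] (α : PadicAlgCl p) :
    (X - C α).gaussNorm (padicAlgClAbv p) 1 = max 1 ‖α‖ := by
  apply le_antisymm
  · obtain ⟨i, hi⟩ := exists_eq_gaussNorm (padicAlgClAbv p) 1 (X - C α)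
    rw [hi, one_pow, mul_one, padicAlgClAbv_apply]
    rcases i with _ | _ | i
    · simp
    · simp
    · simp [coeff_X]
  · apply max_le
    · have h := le_gaussNorm (padicAlgClAbv p) (X - C α) zero_le_one 1
      rwa [one_pow, mul_one, padicAlgClAbv_apply, coeff_sub, coeff_X_one,
        coeff_C_of_ne_zero one_ne_zero, sub_zero, norm_one] at h
    · have h := le_gaussNorm (padicAlgClAbv p) (X - C α) zero_le_one 0
      rwa [one_pow, mul_one, padicAlgClAbv_apply, coeff_sub, coeff_X_zero, coeff_C_zero,
        zero_sub, norm_neg] at h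

lemma gaussNorm_multiset_prod_X_sub_C (p : ℕ) [Fact p.Prime] (s : Multiset (PadicAlgCl p)) :
    (s.map (fun α => X - C α)).prod.gaussNorm (padicAlgClAbv p) 1 =
      (s.map (fun α => max 1 ‖α‖)).prod := by
  induction s using Multiset.induction_on with
  | empty =>
    rw [Multiset.map_zero, Multiset.prod_zero, ← C_1, gaussNorm_C]
    simp
  | cons a s ih =>
    rw [Multiset.map_cons, Multiset.prod_cons, Multiset.map_cons, Multiset.prod_cons,
      gaussNorm_mul (isNonarchimedean_padicAlgClAbv p) one_pos, ih, gaussNorm_X_sub_C_padic]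

lemma gaussNorm_map_of_isPrimitive (p : ℕ) [Fact p.Prime] (f : Polynomial ℤ)
    (hprim : f.IsPrimitive) :
    (f.map (algebraMap ℤ (PadicAlgCl p))).gaussNorm (padicAlgClAbv p) 1 = 1 := by
  apply le_antisymm
  · obtain ⟨i, hi⟩ := exists_eq_gaussNorm (padicAlgClAbv p) 1 (f.map (algebraMap ℤ (PadicAlgCl p)))
    rw [hi, one_pow, mul_one, padicAlgClAbv_apply, coeff_map, eq_intCast, norm_intCast_padicAlgCl]
    exact Padic.norm_int_le_one _
  · obtain ⟨i, hi⟩ : ∃ i, ¬ (p : ℤ) ∣ f.coeff i := by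
      by_contra! h
      have hu := isPrimitive_iff_isUnit_of_C_dvd.mp hprim (p : ℤ) (C_dvd_iff_dvd_coeff _ _ |>.mpr h)
      exact (Nat.prime_iff_prime_int.mp (Fact.out : p.Prime)).not_isUnit hu
    have h1 : ‖(f.coeff i : ℚ_[p])‖ = 1 := by
      refine le_antisymm (Padic.norm_int_le_one _) (not_lt.mp fun h => hi ?_)
      exact Padic.norm_intCast_lt_one_iff.mp h
    have := le_gaussNorm (padicAlgClAbv p) (f.map (algebraMap ℤ (PadicAlgCl p))) zero_le_one i
    rwa [one_pow, mul_one, padicAlgClAbv_apply, coeff_map, eq_intCast, norm_intCast_padicAlgCl,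
      h1] at this

/-- The `p`-adic Mahler measure of a primitive integer polynomial is `1`. -/
lemma norm_leadingCoeff_mul_prod_roots (p : ℕ) [Fact p.Prime] (f : Polynomial ℤ)
    (hprim : f.IsPrimitive) :
    ‖(f.leadingCoeff : ℚ_[p])‖ *
      ((f.aroots (PadicAlgCl p)).map (fun α => max 1 ‖α‖)).prod = 1 := by
  have h := gaussNorm_map_of_isPrimitive p f hprim
  rwa [(IsAlgClosed.splits (f.map (algebraMap ℤ (PadicAlgCl p)))).eq_prod_roots,
    gaussNorm_mul (isNonarchimedean_padicAlgClAbv p) one_pos, gaussNorm_multiset_prod_X_sub_C,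
    gaussNorm_C, padicAlgClAbv_apply,
    leadingCoeff_map_of_injective (RingHom.injective_int (algebraMap ℤ (PadicAlgCl p))),
    eq_intCast, norm_intCast_padicAlgCl] at h

lemma log_prod_max_one_norm {E : Type*} [Norm E] (s : Multiset E) :
    Real.log (s.map (fun α => max 1 ‖α‖)).prod =
      (s.map (fun α => if 1 < ‖α‖ then Real.log ‖α‖ else 0)).sum := by
  induction s using Multiset.induction_on with
  | empty => simp
  | cons a s ih =>
    have hs : (s.map (fun α => max 1 ‖α‖)).prod ≠ 0 := by
      refine Multiset.prod_ne_zero fun h => ?_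
      obtain ⟨b, -, hb⟩ := Multiset.mem_map.mp h
      exact (lt_max_of_lt_left one_pos).ne' hb
    rw [Multiset.map_cons, Multiset.prod_cons, Multiset.map_cons, Multiset.sum_cons,
      Real.log_mul (lt_max_of_lt_left one_pos).ne' hs, ih]
    congr 1
    split_ifs with h
    · rw [max_eq_right h.le]
    · rw [max_eq_left (not_lt.mp h), Real.log_one]

lemma log_norm_intCast (p : ℕ) [Fact p.Prime] (z : ℤ) (hz : z ≠ 0) :
    Real.log ‖(z : ℚ_[p])‖ = -((padicValInt p z : ℝ) * Real.log p) := by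
  rw [Padic.norm_eq_zpow_neg_valuation (by exact_mod_cast hz), Real.log_zpow,
    Padic.valuation_intCast]
  push_cast
  ring

/-- For a primitive integer polynomial `f = ∑ aᵢ tⁱ` of degree `n` with `aₙ ≠ 0` and a prime `p`,
the sum of `log ‖α‖_p` over the roots `α` of `f` in the algebraic closure of `ℚ_p`
(counted with multiplicity) with `‖α‖_p > 1` equals `v_p(aₙ) · log p`. -/
theorem sum_log_padicAbs_roots_eq_padicValInt_leadingCoeff
    (p : ℕ) [Fact p.Prime] (f : Polynomial ℤ) (n : ℕ)
    (hdeg : f.natDegree = n) (han : f.coeff n ≠ 0) (hprim : f.IsPrimitive) :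
    ((f.aroots (AlgebraicClosure ℚ_[p])).map
        (fun α => if 1 < padicClosureAbs p α then Real.log (padicClosureAbs p α) else 0)).sum =
      (padicValInt p (f.coeff n) : ℝ) * Real.log p := by
  subst hdeg
  simp only [padicClosureAbs_eq_norm]
  rw [← log_prod_max_one_norm]
  have h := norm_leadingCoeff_mul_prod_roots p f hprim
  have hlog := congrArg Real.log h
  rw [Real.log_mul (left_ne_zero_of_mul_eq_one h) (right_ne_zero_of_mul_eq_one h), Real.log_one,
    leadingCoeff, log_norm_intCast p _ han] at hlog
  linarith
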